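/- Let α > −1 be real, N ≥ 1, c > 0, let (v_n)_{n≥1} be a strictly increasing sequence of positive reals, and let (u_n)_{n≥1} be real numbers such that for every integer k ≥ 0 and every 0 ≤ i ≤ N−1 the series Σ_{n=1}^∞ v_n^k · |u_n| · |J_α^{(i)}(c v_n)| and Σ_{n=1}^∞ v_n^k · |u_n| · ( |J_α(c v_n)| + |J_{α+1}(c v_n)| ) converge. Set n_1 := ⌈N/2⌉, and define the moments m_k^{(1)} := Σ_{n=1}^∞ v_n^{2k+α} · J_α(c v_n) · u_n and m_k^{(2)} := Σ_{n=1}^∞ v_n^{2k+α+1} · J_{α+1}(c v_n) · u_n for k ≥ 0. Let H_N be the determinant of the N×N matrix whose (i,j) entry equals m_{i+j−2}^{(1)} for 1 ≤ i ≤ n_1 and equals m_{(i−n_1)+j−2}^{(2)} for n_1 + 1 ≤ i ≤ N. Then det_{1≤i,j≤N}[ Σ_{n=1}^∞ (−1)^{i−1} · v_n^{i+2j+α−3} · J_α^{(i−1)}(c v_n) · u_n ] = (−1)^{(N(N−3) + 2 n_1²)/4} · H_N, where the exponent (N(N−3) + 2 n_1²)/4 is an integer. -/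

import Mathlib

/-- The Bessel function of the first kind, for `x > 0`,
`J_α(x) = Σ_{k=0}^∞ (-1)^k (x/2)^{2k+α} / (k! Γ(k+α+1))`. -/
noncomputable def besselJ (α x : ℝ) : ℝ :=
  ∑' k : ℕ, (-1 : ℝ) ^ k * (x / 2) ^ (2 * (k : ℝ) + α) /
    ((Nat.factorial k : ℝ) * Real.Gamma ((k : ℝ) + α + 1))

noncomputable def bF (α t : ℝ) : ℝ := ∑' k : ℕ, (-1 : ℝ)^k / ((Nat.factorial k : ℝ) * Real.Gamma ((k : ℝ) + α + 1)) * t^k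

lemma gpos {α : ℝ} (hα : -1 < α) (k : ℕ) : 0 < Real.Gamma ((k : ℝ) + α + 1) := by
  apply Real.Gamma_pos_of_pos
  have : (0:ℝ) ≤ k := by positivity
  linarith

lemma bF_summable {α : ℝ} (hα : -1 < α) (t : ℝ) :
    Summable fun k : ℕ => (-1 : ℝ)^k / ((Nat.factorial k : ℝ) * Real.Gamma ((k : ℝ) + α + 1)) * t^k := by
  have hG := gpos hα
  obtain ⟨c, hc, hle⟩ : ∃ c : ℝ, 0 < c ∧ ∀ k : ℕ, c ≤ Real.Gamma ((k : ℝ) + α + 1) := by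
    have h2 : ∀ k : ℕ, min (Real.Gamma (((0:ℕ) : ℝ) + α + 1)) (Real.Gamma (((1:ℕ) : ℝ) + α + 1)) ≤ Real.Gamma ((k : ℝ) + α + 1) := by
      intro k
      rcases k with _ | k
      · exact min_le_left _ _
      · refine (min_le_right _ _).trans ?_
        induction k with
        | zero => simp
        | succ k ih =>
          refine ih.trans ?_
          have : (((k+1+1 : ℕ) : ℝ) + α + 1) = (((k+1 : ℕ) : ℝ) + α + 1) + 1 := by push_cast; ring
          rw [this, Real.Gamma_add_one (s := ((k+1 : ℕ) : ℝ) + α + 1)]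
          · have h1 : (1:ℝ) ≤ ((k+1 : ℕ) : ℝ) + α + 1 := by push_cast; have : (0:ℝ) ≤ k := by positivity
                                                            linarith
            exact le_mul_of_one_le_left (hG (k+1)).le h1
          · push_cast; have : (0:ℝ) ≤ k := by positivity
            linarith
    exact ⟨_, lt_min (hG 0) (hG 1), h2⟩
  refine Summable.of_norm_bounded (g := fun k : ℕ => c⁻¹ * (|t|^k / (Nat.factorial k : ℝ))) ((Real.summable_pow_div_factorial |t|).mul_left _) ?_
  intro k
  have hk := hle k
  have hf : (0:ℝ) < Nat.factorial k := by positivity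
  simp only [norm_mul, norm_div, norm_pow, norm_neg, norm_one, one_pow, Real.norm_eq_abs, abs_of_pos hf, abs_of_pos (hG k)]
  have : (Real.Gamma ((k : ℝ) + α + 1))⁻¹ ≤ c⁻¹ := inv_anti₀ hc hk
  calc _ = (Real.Gamma ((k : ℝ) + α + 1))⁻¹ * (|t|^k / (Nat.factorial k : ℝ)) := by field_simp
    _ ≤ _ := by gcongr

lemma bF_coeff {α : ℝ} (hα : -1 < α) (k : ℕ) :
    (-1 : ℝ)^(k+1) / ((Nat.factorial (k+1) : ℝ) * Real.Gamma (((k+1 : ℕ) : ℝ) + α + 1)) * ((k+1 : ℕ) : ℝ)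
     = -((-1 : ℝ)^k / ((Nat.factorial k : ℝ) * Real.Gamma ((k : ℝ) + (α+1) + 1))) := by
  have h := (gpos (show -1 < α+1 by linarith) k).ne'
  have : (((k+1 : ℕ) : ℝ) + α + 1) = (k : ℝ) + (α+1) + 1 := by push_cast; ring
  rw [this, Nat.factorial_succ]
  push_cast
  have : (k:ℝ)+1 ≠ 0 := by positivity
  have : (Nat.factorial k : ℝ) ≠ 0 := by positivity
  field_simp
  ring

lemma bF_deriv {α : ℝ} (hα : -1 < α) (t : ℝ) : HasDerivAt (bF α) (-bF (α+1) t) t := by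
  have hα1 : -1 < α + 1 := by linarith
  have key : ∀ y : ℝ, ∀ k : ℕ, (-1 : ℝ)^(k+1) / ((Nat.factorial (k+1) : ℝ) * Real.Gamma (((k+1 : ℕ) : ℝ) + α + 1)) * (((k+1 : ℕ) : ℝ) * y^k)
     = -((-1 : ℝ)^k / ((Nat.factorial k : ℝ) * Real.Gamma ((k : ℝ) + (α+1) + 1)) * y^k) := by
    intro y k
    rw [← mul_assoc, bF_coeff hα, neg_mul]
  let R := |t| + 1
  have hR : 0 < R := by positivity
  have hs : ∀ y, Summable fun n : ℕ => (-1 : ℝ)^n / ((Nat.factorial n : ℝ) * Real.Gamma ((n : ℝ) + α + 1)) * ((n:ℝ) * y^(n-1)) := by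
    intro y
    rw [← summable_nat_add_iff 1]
    simp only [Nat.add_sub_cancel, key]
    exact (bF_summable hα1 y).neg
  have := hasDerivAt_tsum_of_isPreconnected
    (g := fun (n:ℕ) y => (-1 : ℝ)^n / ((Nat.factorial n : ℝ) * Real.Gamma ((n : ℝ) + α + 1)) * y^n)
    (g' := fun (n:ℕ) y => (-1 : ℝ)^n / ((Nat.factorial n : ℝ) * Real.Gamma ((n : ℝ) + α + 1)) * ((n:ℝ) * y^(n-1)))
    (u := fun n => ‖(-1 : ℝ)^n / ((Nat.factorial n : ℝ) * Real.Gamma ((n : ℝ) + α + 1)) * ((n:ℝ) * R^(n-1))‖)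
    (t := Metric.ball (0:ℝ) R) (y₀ := 0) (y := t) (hs R).norm Metric.isOpen_ball (convex_ball _ _).isPreconnected
    (fun n y _ => (hasDerivAt_pow n y).const_mul _)
    (by
      intro n y hy
      simp only [norm_mul, norm_pow]
      have : ‖y‖ ≤ ‖R‖ := by
        rw [mem_ball_zero_iff] at hy
        rw [Real.norm_of_nonneg hR.le]; exact hy.le
      gcongr)
    (by simpa using hR) (bF_summable hα 0) (by simp [R])
  refine this.congr_deriv ?_
  rw [(hs t).tsum_eq_zero_add]
  simp only [Nat.add_sub_cancel, key, tsum_neg, bF]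
  simp

lemma bF_rec {α : ℝ} (hα : -1 < α) (t : ℝ) : (α+1) * bF (α+1) t - t * bF (α+1+1) t = bF α t := by
  have hα1 : -1 < α + 1 := by linarith
  have hα2 : -1 < α + 1 + 1 := by linarith
  have s1 := (bF_summable hα1 t)
  have s2 := (bF_summable hα2 t)
  have s0 := (bF_summable hα t)
  have e1 : bF (α+1) t = _ := s1.tsum_eq_zero_add
  have e0 : bF α t = _ := s0.tsum_eq_zero_add
  have s1' := (summable_nat_add_iff 1).2 s1
  rw [e1, e0, bF, mul_add, ← tsum_mul_left, ← tsum_mul_left, add_sub_assoc, ← Summable.tsum_sub (s1'.mul_left _) (s2.mul_left _)]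
  congr 1
  · have : (0:ℕ) + (α+1) + 1 = (α+1)+1 := by push_cast; ring
    rw [this, Real.Gamma_add_one (by linarith)]
    have h0 := (gpos hα 0).ne'
    simp at h0 ⊢
    have : α+1 ≠ 0 := by linarith
    field_simp
  · congr 1; ext k
    have c1 := bF_coeff hα1 k
    have : (((k+1:ℕ):ℝ) + (α+1) + 1) = (((k+1:ℕ):ℝ) + α + 1) + 1 := by ring
    have hp : (((k+1:ℕ):ℝ) + α + 1) ≠ 0 := by
      push_cast; have : (0:ℝ) ≤ k := by positivity
      linarith
    have hk := (gpos hα (k+1)).ne'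
    have hf : (Nat.factorial (k+1) : ℝ) ≠ 0 := by positivity
    have c2 : (-1:ℝ)^(k+1) / ((Nat.factorial (k+1) : ℝ) * Real.Gamma (((k+1:ℕ):ℝ) + α + 1)) =
      (((k+1:ℕ):ℝ) + α + 1) * ((-1:ℝ)^(k+1) / ((Nat.factorial (k+1) : ℝ) * Real.Gamma (((k+1:ℕ):ℝ) + (α + 1) + 1))) := by
      rw [this, Real.Gamma_add_one hp]; field_simp
    rw [c2]
    linear_combination (-t^(k+1)) * c1

lemma besselJ_eq (α : ℝ) {x : ℝ} (hx : 0 < x) : besselJ α x = (x/2)^α * bF α ((x/2)^2) := by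
  rw [besselJ, bF, ← tsum_mul_left]
  congr 1; ext k
  have : (x/2)^(2*(k:ℝ)+α) = (x/2)^α * ((x/2)^2)^k := by
    rw [Real.rpow_add (by positivity), ← pow_mul, ← Real.rpow_natCast]; push_cast; ring
  rw [this]; ring

lemma bJ_aux (α : ℝ) (hα : -1 < α) {x : ℝ} (hx : 0 < x) :
    HasDerivAt (besselJ α) (α * (x/2)^(α-1) * (1/2) * bF α ((x/2)^2) - (x/2)^α * (bF (α+1) ((x/2)^2) * (x/2))) x := by
  have h2 : HasDerivAt (fun x : ℝ => x/2) (1/2) x := (hasDerivAt_id x).div_const 2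
  have h3 := (h2.rpow_const (p := α) (Or.inl (by positivity))).mul ((bF_deriv hα ((x/2)^2)).comp x (h2.pow 2))
  have : besselJ α =ᶠ[nhds x] ((fun x : ℝ => (x/2)^α) * (bF α ∘ ((fun x : ℝ => x/2)^2))) := by
    filter_upwards [lt_mem_nhds hx] with y hy
    simp [besselJ_eq α hy]
  refine (h3.congr_of_eventuallyEq this).congr_deriv ?_
  simp
  ring

lemma bJ_d0 (α : ℝ) (hα : -1 < α) {x : ℝ} (hx : 0 < x) :
    HasDerivAt (besselJ α) (α / x * besselJ α x - besselJ (α+1) x) x := by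
  refine (bJ_aux α hα hx).congr_deriv ?_
  rw [besselJ_eq _ hx, besselJ_eq _ hx, Real.rpow_add_one (by positivity), Real.rpow_sub_one (by positivity)]
  field_simp

lemma bJ_d1 (α : ℝ) (hα : -1 < α) {x : ℝ} (hx : 0 < x) :
    HasDerivAt (besselJ (α+1)) (besselJ α x - (α+1) / x * besselJ (α+1) x) x := by
  refine (bJ_d0 (α+1) (by linarith) hx).congr_deriv ?_
  rw [besselJ_eq _ hx, besselJ_eq _ hx, besselJ_eq _ hx, Real.rpow_add_one (y := α+1) (by positivity), Real.rpow_add_one (y := α) (by positivity), ← bF_rec hα]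
  field_simp
  ring

noncomputable def bK (α : ℝ) (r : ℕ) (x : ℝ) : ℝ := if Even r then besselJ α x else besselJ (α+1) x

noncomputable def bE (α : ℝ) (r : ℕ) (x : ℝ) : ℝ := x^r * bK α r x

noncomputable def bd (α : ℝ) (r : ℕ) : ℝ := if Even r then r + α else r - α - 1

lemma bE_deriv (α : ℝ) (hα : -1 < α) (r : ℕ) {x : ℝ} (hx : 0 < x) :
    HasDerivAt (bE α r) ((bd α r * bE α r x + (-(-1)^r) * bE α (r+1) x) / x) x := by
  have hp : (r:ℝ) * x^(r-1) = r * x^r / x := by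
    rcases r with _ | r
    · simp
    · simp [pow_succ]; field_simp
  by_cases hr : Even r
  · have e : bE α r = fun x => x^r * besselJ α x := by ext y; simp [bE, bK, hr]
    have hr1 : ¬ Even (r+1) := by simpa [Nat.even_add_one] using hr
    rw [e]
    refine ((hasDerivAt_pow r x).mul (bJ_d0 α hα hx)).congr_deriv ?_
    simp only [bd, bE, bK, hr, hr1, if_true, if_false, hr.neg_one_pow, hp]
    field_simp
    ring
  · have e : bE α r = fun x => x^r * besselJ (α+1) x := by ext y; simp [bE, bK, hr]
    have hr1 : Even (r+1) := by simpa [Nat.even_add_one] using hr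
    rw [e]
    refine ((hasDerivAt_pow r x).mul (bJ_d1 α hα hx)).congr_deriv ?_
    simp only [bd, bE, bK, hr, hr1, if_true, if_false, (Nat.not_even_iff_odd.1 hr).neg_one_pow, hp]
    field_simp
    ring

lemma iter (α : ℝ) (hα : -1 < α) (i : ℕ) : ∃ l : ℕ → ℝ, (∀ r, i < r → l r = 0) ∧
    l i = ∏ r ∈ Finset.range i, (-(-1:ℝ)^r) ∧
    ∀ x : ℝ, 0 < x → iteratedDeriv i (besselJ α) x = (∑ r ∈ Finset.range (i+1), l r * bE α r x) / x^i := by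
  induction i with
  | zero => exact ⟨fun r => if r = 0 then 1 else 0, by intro r hr; simp; omega, by simp, by intro x hx; simp [bE, bK]⟩
  | succ i ih =>
    obtain ⟨l, h0, h1, h2⟩ := ih
    refine ⟨fun r => (bd α r - i) * l r + (if r = 0 then 0 else (-(-1:ℝ)^(r-1)) * l (r-1)), ?_, ?_, ?_⟩
    · intro r hr
      have : r ≠ 0 := by omega
      simp [this, h0 r (by omega), h0 (r-1) (by omega)]
    · simp [h0 (i+1) (by omega), h1, Finset.prod_range_succ]
      ring
    · intro x hx
      rw [iteratedDeriv_succ]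
      have hS : HasDerivAt (fun y => (∑ r ∈ Finset.range (i+1), l r * bE α r y))
          (∑ r ∈ Finset.range (i+1), l r * ((bd α r * bE α r x + (-(-1)^r) * bE α (r+1) x) / x)) x :=
        HasDerivAt.fun_sum fun r _ => (bE_deriv α hα r hx).const_mul _
      have hD := hS.fun_div (hasDerivAt_pow i x) (by positivity)
      have : iteratedDeriv i (besselJ α) =ᶠ[nhds x] fun y => (∑ r ∈ Finset.range (i+1), l r * bE α r y) / y^i := by
        filter_upwards [lt_mem_nhds hx] with y hy using h2 y hy
      rw [(hD.congr_of_eventuallyEq this).deriv]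
      have hp : (i:ℝ) * x^(i-1) = i * x^i / x := by
        rcases i with _ | r
        · simp
        · simp [pow_succ]; field_simp
      rw [hp]
      simp only [add_mul, Finset.sum_add_distrib]
      rw [Finset.sum_range_succ (fun r => (bd α r - i) * l r * bE α r x) (i+1), h0 (i+1) (by omega),
        Finset.sum_range_succ' _ (i+1)]
      simp only [mul_zero, zero_mul, add_zero, if_true, Nat.succ_ne_zero, if_false, Nat.add_sub_cancel]
      have e1 : ∑ r ∈ Finset.range (i+1), l r * ((bd α r * bE α r x + (-(-1)^r) * bE α (r+1) x) / x) =
         ((∑ r ∈ Finset.range (i+1), l r * (bd α r * bE α r x)) + ∑ r ∈ Finset.range (i+1), -(-1)^r * l r * bE α (r+1) x) / x := by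
        rw [← Finset.sum_add_distrib, Finset.sum_div]
        refine Finset.sum_congr rfl fun r _ => ?_
        ring
      have e2 : ∑ r ∈ Finset.range (i+1), (bd α r - i) * l r * bE α r x = 
         (∑ r ∈ Finset.range (i+1), l r * (bd α r * bE α r x)) - i * ∑ r ∈ Finset.range (i+1), l r * bE α r x := by
        rw [Finset.mul_sum, ← Finset.sum_sub_distrib]
        refine Finset.sum_congr rfl fun r _ => ?_
        ring
      rw [e1, e2]
      generalize ∑ r ∈ Finset.range (i+1), l r * (bd α r * bE α r x) = a
      generalize ∑ r ∈ Finset.range (i+1), l r * bE α r x = b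
      generalize ∑ r ∈ Finset.range (i+1), -(-1)^r * l r * bE α (r+1) x = d
      field_simp
      ring

lemma T_even (n : ℕ) : ∏ r ∈ Finset.range (2*n), (-1:ℝ)^r = (-1)^n := by
  induction n with
  | zero => simp
  | succ n ih => 
    rw [show 2*(n+1) = 2*n+1+1 by ring, Finset.prod_range_succ, Finset.prod_range_succ, ih]
    simp [pow_succ, pow_mul]

lemma D_even (n : ℕ) : ∏ i ∈ Finset.range (2*n), ∏ r ∈ Finset.range i, (-1:ℝ)^r = 1 := by
  induction n with
  | zero => simp
  | succ n ih => 
    rw [show 2*(n+1) = 2*n+1+1 by ring, Finset.prod_range_succ, Finset.prod_range_succ, ih,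
      Finset.prod_range_succ, T_even]
    simp [pow_mul, ← mul_pow]

def sg (N n₁ : ℕ) : ℝ := ∏ m ∈ Finset.range (N - n₁), (-1:ℝ)^(n₁ - m - 1)

lemma final_sign (N n₁ : ℕ) (hn₁ : n₁ = (N + 1) / 2) :
    (4 : ℤ) ∣ ((N : ℤ) * ((N : ℤ) - 3) + 2 * (n₁ : ℤ) ^ 2) ∧
    (∏ i ∈ Finset.range N, ∏ r ∈ Finset.range i, (-1:ℝ)^r) * sg N n₁ 
     = (-1 : ℝ) ^ (((N : ℤ) * ((N : ℤ) - 3) + 2 * (n₁ : ℤ) ^ 2) / 4) := by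
  obtain ⟨n, hn⟩ := Nat.even_or_odd' N
  have ht := Finset.sum_range_id_mul_two n
  have hT : ∏ r ∈ Finset.range n, (-1:ℝ)^r = (-1)^(∑ r ∈ Finset.range n, r) := Finset.prod_pow_eq_pow_sum _ _ _
  generalize (∑ r ∈ Finset.range n, r) = t at ht hT
  have ht' : (n:ℤ) * n = 2 * t + n := by
    rcases n with _ | n
    · simp at ht ⊢; omega
    · simp at ht; zify at ht; push_cast; linarith
  have hrefl := Finset.prod_range_reflect (fun r => (-1:ℝ)^r) n
  rcases hn with rfl | rfl
  · have : n₁ = n := by omega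
    subst this
    have hZ : (((2 * n₁ : ℕ)) : ℤ) * ((((2 * n₁ : ℕ)) : ℤ) - 3) + 2 * (n₁ : ℤ) ^ 2 = 4 * (3 * t) := by
      push_cast; linear_combination 6 * ht'
    rw [hZ, Int.mul_ediv_cancel_left _ (by norm_num), D_even, sg, show 2 * n₁ - n₁ = n₁ by omega]
    refine ⟨dvd_mul_right _ _, ?_⟩
    have : ∀ m, n₁ - m - 1 = n₁ - 1 - m := by intro m; omega
    simp only [this, hrefl, hT, one_mul]
    rw [zpow_mul]; norm_num
  · have : n₁ = n + 1 := by omega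
    subst this
    have hZ : (((2 * n + 1 : ℕ)) : ℤ) * ((((2 * n + 1 : ℕ)) : ℤ) - 3) + 2 * ((n+1 : ℕ) : ℤ) ^ 2 = 4 * (3 * t + 2 * n) := by
      push_cast; linear_combination 6 * ht'
    rw [hZ, Int.mul_ediv_cancel_left _ (by norm_num), Finset.prod_range_succ, D_even, T_even, sg, show 2 * n + 1 - (n+1) = n by omega]
    refine ⟨dvd_mul_right _ _, ?_⟩
    have : ∏ m ∈ Finset.range n, (-1:ℝ)^(n+1-m-1) = ∏ m ∈ Finset.range n, ((-1)^(n-1-m) * (-1)) := by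
      refine Finset.prod_congr rfl fun m hm => ?_
      rw [Finset.mem_range] at hm
      rw [← pow_succ]; congr 1; omega
    rw [this, Finset.prod_mul_distrib, hrefl, hT, zpow_add₀ (by norm_num), zpow_mul, zpow_mul]
    norm_num
    rw [mul_left_comm, ← mul_pow]; norm_num

lemma perm_exists (N n₁ : ℕ) (hn₁ : n₁ = (N + 1) / 2) : ∃ σ : Equiv.Perm (Fin N),
    (∀ i, (σ i : ℕ) = if (i:ℕ) < n₁ then 2 * (i:ℕ) else 2 * (i - n₁) + 1) ∧
    ((Equiv.Perm.sign σ : ℤ) : ℝ) = sg N n₁ := by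
  let f : Fin N → Fin N := fun i => ⟨if (i:ℕ) < n₁ then 2 * (i:ℕ) else 2 * (i - n₁) + 1, by have := i.2; split_ifs <;> omega⟩
  have hf : Function.Injective f := by
    intro a b h
    simp only [f, Fin.mk.injEq] at h
    ext
    split_ifs at h <;> omega
  let σ : Equiv.Perm (Fin N) := Equiv.ofBijective f (Finite.injective_iff_bijective.1 hf)
  have hσ : ∀ i, (σ i : ℕ) = if (i:ℕ) < n₁ then 2 * (i:ℕ) else 2 * (i - n₁) + 1 := fun i => rfl
  refine ⟨σ, hσ, ?_⟩
  rw [Equiv.Perm.sign_eq_prod_prod_Iio]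
  push_cast
  have inner : ∀ j : Fin N, (∏ i ∈ Finset.Iio j, (((if σ i < σ j then (1:ℤˣ) else -1 : ℤˣ) : ℤ) : ℝ)) =
     if (j:ℕ) < n₁ then 1 else (-1:ℝ)^(n₁ - (j - n₁) - 1) := by
    intro j
    have h1 : ∀ i ∈ Finset.Iio j, (((if σ i < σ j then (1:ℤˣ) else -1 : ℤˣ) : ℤ) : ℝ) = 
       (fun i : ℕ => if (n₁ ≤ (j:ℕ) ∧ j - n₁ < i ∧ i < n₁) then (-1:ℝ) else 1) (Fin.valEmbedding i) := by
      intro i hi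
      have hi' : (i:ℕ) < j := by simpa using hi
      have : σ i < σ j ↔ ¬ (n₁ ≤ (j:ℕ) ∧ j - n₁ < (i:ℕ) ∧ (i:ℕ) < n₁) := by
        rw [Fin.lt_def, hσ, hσ]
        split_ifs <;> omega
      simp only [this, Fin.valEmbedding_apply]
      split_ifs <;> simp
    rw [Finset.prod_congr rfl h1, ← Finset.prod_map (Finset.Iio j) Fin.valEmbedding (fun i : ℕ => if (n₁ ≤ (j:ℕ) ∧ j - n₁ < i ∧ i < n₁) then (-1:ℝ) else 1), Fin.map_valEmbedding_Iio,
      Finset.prod_ite, Finset.prod_const, Finset.prod_const_one, mul_one]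
    split_ifs with h
    · rw [Finset.filter_false_of_mem]; simp
      intro x _; omega
    · rw [← Nat.card_Ioo]
      congr 2
      ext x; simp; omega
  have hN : N = n₁ + (N - n₁) := by omega
  refine (Finset.prod_congr rfl fun j _ => ?_).trans (b := ∏ j : Fin N, if (j:ℕ) < n₁ then 1 else (-1:ℝ)^(n₁ - (j - n₁) - 1)) ?_
  · simpa using inner j
  rw [← Finset.prod_range (fun j => if j < n₁ then 1 else (-1:ℝ)^(n₁ - (j - n₁) - 1))]
  conv_lhs => rw [hN]
  rw [Finset.prod_range_add, Finset.prod_eq_one, sg, one_mul]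
  · simp
  · intro x hx; simp at hx; simp [hx]

lemma summable_aux (v u g : ℕ → ℝ) (hvmono : StrictMono v) (hvpos : ∀ n, 0 < v n)
    (h : ∀ k : ℕ, Summable fun n => v n ^ k * |u n| * |g n|) (β : ℝ) :
    Summable fun n => v n ^ β * g n * u n := by
  refine Summable.of_norm_bounded (g := fun n => v 0 ^ (β - (⌈β⌉₊:ℕ)) * (v n ^ ⌈β⌉₊ * |u n| * |g n|)) ((h _).mul_left _) ?_
  intro n
  have h0 := hvpos n
  have hle : v 0 ≤ v n := hvmono.monotone (Nat.zero_le n)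
  have e : v n ^ β ≤ v 0 ^ (β - (⌈β⌉₊:ℕ)) * v n ^ ⌈β⌉₊ := by
    calc v n ^ β = v n ^ (β - (⌈β⌉₊:ℕ)) * v n ^ ⌈β⌉₊ := by
          rw [← Real.rpow_natCast, ← Real.rpow_add h0]; simp
      _ ≤ _ := by
          gcongr ?_ * _
          exact Real.rpow_le_rpow_of_nonpos (hvpos 0) hle (by linarith [Nat.le_ceil β])
  rw [norm_mul, norm_mul, Real.norm_of_nonneg (by positivity : (0:ℝ) ≤ v n ^ β)]
  simp only [Real.norm_eq_abs]
  calc v n ^ β * |g n| * |u n| ≤ (v 0 ^ (β - (⌈β⌉₊:ℕ)) * v n ^ ⌈β⌉₊) * |g n| * |u n| := by gcongr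
    _ = _ := by ring

theorem stmt_13 (α : ℝ) (hα : -1 < α) (N : ℕ) (hN : 1 ≤ N) (c : ℝ) (hc : 0 < c)
    (v : ℕ → ℝ) (hvmono : StrictMono v) (hvpos : ∀ n, 0 < v n) (u : ℕ → ℝ)
    (hsum : ∀ k : ℕ, ∀ i < N,
      (Summable fun n : ℕ =>
        v n ^ k * |u n| * |iteratedDeriv i (besselJ α) (c * v n)|) ∧
      (Summable fun n : ℕ =>
        v n ^ k * |u n| * (|besselJ α (c * v n)| + |besselJ (α + 1) (c * v n)|)))
    (n₁ : ℕ) (hn₁ : n₁ = (N + 1) / 2) :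
    (4 : ℤ) ∣ ((N : ℤ) * ((N : ℤ) - 3) + 2 * (n₁ : ℤ) ^ 2) ∧
    (Matrix.of fun i j : Fin N =>
        ∑' n : ℕ, (-1 : ℝ) ^ (i : ℕ) *
          v n ^ (((i : ℕ) : ℝ) + 2 * ((j : ℕ) : ℝ) + α) *
          iteratedDeriv (i : ℕ) (besselJ α) (c * v n) * u n).det
      = (-1 : ℝ) ^ (((N : ℤ) * ((N : ℤ) - 3) + 2 * (n₁ : ℤ) ^ 2) / 4) *
        (Matrix.of fun i j : Fin N =>
          if (i : ℕ) < n₁ then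
            ∑' n : ℕ, v n ^ (2 * (((i : ℕ) + (j : ℕ) : ℕ) : ℝ) + α) *
              besselJ α (c * v n) * u n
          else
            ∑' n : ℕ, v n ^ (2 * ((((i : ℕ) - n₁ + (j : ℕ)) : ℕ) : ℝ) + α + 1) *
              besselJ (α + 1) (c * v n) * u n).det := by
  obtain ⟨hdvd, hsign⟩ := final_sign N n₁ hn₁
  refine ⟨hdvd, ?_⟩
  obtain ⟨σ, hσ, hsg⟩ := perm_exists N n₁ hn₁
  choose l hl0 hl1 hl2 using iter α hα
  have hsumK : ∀ (r : ℕ) (β : ℝ), Summable fun n => v n ^ β * bK α r (c * v n) * u n := by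
    intro r β
    apply summable_aux v u _ hvmono hvpos
    intro k
    refine Summable.of_nonneg_of_le (fun n => ?_) (fun n => ?_) (hsum k 0 (by omega)).2
    · have := hvpos n
      positivity
    · have := hvpos n
      gcongr
      unfold bK
      split_ifs
      · exact le_add_of_nonneg_right (abs_nonneg _)
      · exact le_add_of_nonneg_left (abs_nonneg _)
  let B : Matrix (Fin N) (Fin N) ℝ := Matrix.of fun r j =>
    ∑' n : ℕ, v n ^ (((r : ℕ) : ℝ) + 2 * ((j : ℕ) : ℝ) + α) * bK α r (c * v n) * u n
  let L : Matrix (Fin N) (Fin N) ℝ := Matrix.of fun i r => (-1)^(i:ℕ) * l i r * (c^(r:ℕ) / c^(i:ℕ))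
  have hA : (Matrix.of fun i j : Fin N =>
        ∑' n : ℕ, (-1 : ℝ) ^ (i : ℕ) *
          v n ^ (((i : ℕ) : ℝ) + 2 * ((j : ℕ) : ℝ) + α) *
          iteratedDeriv (i : ℕ) (besselJ α) (c * v n) * u n) = L * B := by
    ext i j
    simp only [Matrix.mul_apply, Matrix.of_apply, L, B]
    simp only [← tsum_mul_left]
    rw [← Summable.tsum_finsetSum (fun r _ => (hsumK _ _).mul_left _)]
    congr 1; ext n
    have h0 := hvpos n
    have hx : 0 < c * v n := mul_pos hc h0
    have hsub : ∑ r ∈ Finset.range ((i:ℕ)+1), l i r * bE α r (c * v n) = ∑ r : Fin N, l i r * bE α r (c * v n) := by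
      rw [← Finset.sum_range (fun r => l i r * bE α r (c * v n))]
      apply Finset.sum_subset
      · intro r hr; have := i.2; simp at hr ⊢; omega
      · intro r _ hr; simp at hr; rw [hl0 i r (by omega), zero_mul]
    rw [hl2 i _ hx, hsub, Finset.sum_div, Finset.mul_sum, Finset.sum_mul]
    refine Finset.sum_congr rfl fun r _ => ?_
    have hp : ∀ r : ℕ, v n ^ ((r : ℝ) + 2 * ((j : ℕ) : ℝ) + α) = v n ^ r * v n ^ (2 * ((j : ℕ) : ℝ) + α) := by
      intro r
      rw [← Real.rpow_natCast, ← Real.rpow_add h0, add_assoc]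
    rw [hp, hp, bE, mul_pow, mul_pow]
    field_simp
  have hL : L.det = ∏ i ∈ Finset.range N, ∏ r ∈ Finset.range i, (-1:ℝ)^r := by
    rw [Matrix.det_of_isLowerTriangular, Finset.prod_range]
    · refine Finset.prod_congr rfl fun i _ => ?_
      simp only [L, Matrix.of_apply, hl1]
      rw [div_self (by positivity), mul_one, Finset.prod_neg, Finset.card_range, ← mul_assoc, ← mul_pow]
      simp
    · intro i r h
      have h' : (i:ℕ) < r := by simpa using h
      simp [L, hl0 i r h']
  have hH : (Matrix.of fun i j : Fin N =>
          if (i : ℕ) < n₁ then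
            ∑' n : ℕ, v n ^ (2 * (((i : ℕ) + (j : ℕ) : ℕ) : ℝ) + α) *
              besselJ α (c * v n) * u n
          else
            ∑' n : ℕ, v n ^ (2 * ((((i : ℕ) - n₁ + (j : ℕ)) : ℕ) : ℝ) + α + 1) *
              besselJ (α + 1) (c * v n) * u n) = B.submatrix σ id := by
    ext i j
    simp only [Matrix.of_apply, Matrix.submatrix_apply, B, id, hσ, bK]
    split_ifs with h1 h2 h2
    · congr 1; ext n; congr 3; push_cast; ring
    · simp at h2
    · simp at h2
    · congr 1; ext n; congr 3; push_cast; ring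
  have hss : sg N n₁ * sg N n₁ = 1 := by
    rw [← hsg]; norm_cast; simp
  rw [hA, hH, Matrix.det_permute, Matrix.det_mul, hL, ← hsign, hsg]
  linear_combination (-(∏ i ∈ Finset.range N, ∏ r ∈ Finset.range i, (-1:ℝ)^r) * B.det) * hss
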